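/- Fix integers z ≥ 1 and A ≥ z. For 0 < q < 1/2 set p = 1 − q, λ = q/p, [A+1] = (1 − λ^{A+1})/(1 − λ), and T(q) = (z/(2p)) I_{4pq}(z,1/2) + ((A+1)/(p(1−λ)^2[A+1])) I_{(p−q)^2}(1/2,z) − p^{z−1}q^z/(p(1−λ)B(z,z)) + 1/q. Then q · T(q) → 1 as q → 0⁺; that is, the expected duration of the A-Nakamoto attack cycle is asymptotic to 1/q interblock times as the attacker hashrate q tends to 0. -/

import Mathlib

open scoped BigOperators
open Filter

/-- The Beta function `B(a,b) = ∫_0^1 t^(a-1) (1-t)^(b-1) dt`. -/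
noncomputable def Beta (a b : ℝ) : ℝ :=
  ∫ t in (0:ℝ)..1, t ^ (a - 1) * (1 - t) ^ (b - 1)

/-- The regularized incomplete Beta function
`I_x(a,b) = (1/B(a,b)) ∫_0^x t^(a-1) (1-t)^(b-1) dt`. -/
noncomputable def regBeta (x a b : ℝ) : ℝ :=
  (∫ t in (0:ℝ)..x, t ^ (a - 1) * (1 - t) ^ (b - 1)) / Beta a b

/-!
Regularized incomplete Beta values lie in `[0, 1]` and their coefficients in `T(q)`, like the term
with `B(z,z)`, converge as `q → 0⁺`. So `T(q) = 1 / q + O(1)`, whence `q · T(q) → 1`.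
-/

open Asymptotics MeasureTheory Set Topology

section Beta

variable {a b x : ℝ}

lemma beta_integrand_nonneg (hx : x ∈ Icc (0 : ℝ) 1) : 0 ≤ x ^ (a - 1) * (1 - x) ^ (b - 1) :=
  mul_nonneg (Real.rpow_nonneg hx.1 _) (Real.rpow_nonneg (sub_nonneg.2 hx.2) _)

lemma intervalIntegrable_beta_integrand (ha : 0 < a) (hb : 0 < b) :
    IntervalIntegrable (fun t : ℝ => t ^ (a - 1) * (1 - t) ^ (b - 1)) volume 0 1 := by
  have hnorm := (Complex.betaIntegral_convergent (u := a) (v := b) ha hb).norm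
  refine hnorm.congr fun t ht => ?_
  rw [uIoc_of_le zero_le_one] at ht
  have ht' : t ∈ Icc (0 : ℝ) 1 := Ioc_subset_Icc_self ht
  have hcast : ((t ^ (a - 1) * (1 - t) ^ (b - 1) : ℝ) : ℂ)
      = (t : ℂ) ^ ((a : ℂ) - 1) * (1 - (t : ℂ)) ^ ((b : ℂ) - 1) := by
    push_cast [Complex.ofReal_cpow ht'.1, Complex.ofReal_cpow (sub_nonneg.2 ht'.2)]
    rfl
  simp only [← hcast, Complex.norm_of_nonneg (beta_integrand_nonneg ht')]

lemma Beta_pos (ha : 0 < a) (hb : 0 < b) : 0 < Beta a b :=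
  intervalIntegral.intervalIntegral_pos_of_pos_on (intervalIntegrable_beta_integrand ha hb)
    (fun _ ht => mul_pos (Real.rpow_pos_of_pos ht.1 _) (Real.rpow_pos_of_pos (sub_pos.2 ht.2) _))
    zero_lt_one

lemma regBeta_mem_Icc (ha : 0 < a) (hb : 0 < b) (hx : x ∈ Icc (0 : ℝ) 1) :
    regBeta x a b ∈ Icc (0 : ℝ) 1 := by
  have hB := Beta_pos ha hb
  have hnonneg : 0 ≤ ∫ t in (0 : ℝ)..x, t ^ (a - 1) * (1 - t) ^ (b - 1) :=
    intervalIntegral.integral_nonneg hx.1 fun t ht =>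
      beta_integrand_nonneg ⟨ht.1, ht.2.trans hx.2⟩
  have hle : ∫ t in (0 : ℝ)..x, t ^ (a - 1) * (1 - t) ^ (b - 1) ≤ Beta a b :=
    intervalIntegral.integral_mono_interval le_rfl hx.1 hx.2
      ((ae_restrict_mem measurableSet_Ioc).mono fun t ht =>
        beta_integrand_nonneg (Ioc_subset_Icc_self ht))
      (intervalIntegrable_beta_integrand ha hb)
  exact ⟨div_nonneg hnonneg hB.le, (div_le_one hB).2 hle⟩

lemma isBigO_one_regBeta_comp {α : Type*} {l : Filter α} {f : α → ℝ} (ha : 0 < a) (hb : 0 < b)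
    (hf : ∀ᶠ i in l, f i ∈ Icc (0 : ℝ) 1) :
    (fun i => regBeta (f i) a b) =O[l] fun _ => (1 : ℝ) := by
  refine IsBigO.of_bound 1 (hf.mono fun i hi => ?_)
  obtain ⟨hnonneg, hle⟩ := regBeta_mem_Icc ha hb hi
  simpa only [Real.norm_of_nonneg hnonneg, norm_one, mul_one] using hle

end Beta

lemma tendsto_mul_of_sub_inv_isBigO_one {𝕜 : Type*} [NormedField 𝕜] {f : 𝕜 → 𝕜} {l : Filter 𝕜}
    (hl : l ≤ 𝓝[≠] 0) (hf : (fun x => f x - x⁻¹) =O[l] fun _ => (1 : 𝕜)) :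
    Tendsto (fun x => x * f x) l (𝓝 1) := by
  have hid : Tendsto (fun x : 𝕜 => x * 1) l (𝓝 0) := by
    simp only [mul_one]
    exact tendsto_id'.2 (hl.trans nhdsWithin_le_nhds)
  have herror : Tendsto (fun x => x * (f x - x⁻¹)) l (𝓝 0) :=
    ((isBigO_refl (fun x : 𝕜 => x) l).mul hf).trans_tendsto hid
  have hlim : Tendsto (fun x => x * (f x - x⁻¹) + 1) l (𝓝 1) := by
    simpa only [zero_add] using herror.add_const 1
  refine hlim.congr' ?_
  filter_upwards [hl self_mem_nhdsWithin] with x hx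
  rw [mul_sub, mul_inv_cancel₀ hx, sub_add_cancel]

/-- The expected duration `T(q)` of an attack cycle, in interblock times, with the integers `z` and
`A` relaxed to real parameters. -/
noncomputable def attackCycleDuration (z A q : ℝ) : ℝ :=
  let p : ℝ := 1 - q
  let lam : ℝ := q / p
  z / (2 * p) * regBeta (4 * p * q) z (1 / 2)
    + (A + 1) / (p * (1 - lam) ^ 2 * ((1 - lam ^ (A + 1)) / (1 - lam)))
        * regBeta ((p - q) ^ 2) (1 / 2) z
    - p ^ (z - 1) * q ^ z / (p * (1 - lam) * Beta z z)
    + 1 / q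

section Duration

variable {z A : ℝ}

lemma isBigO_one_regBeta_four_mul (hz : 0 < z) :
    (fun q : ℝ => regBeta (4 * (1 - q) * q) z (1 / 2)) =O[𝓝[>] 0] fun _ => (1 : ℝ) := by
  refine isBigO_one_regBeta_comp hz one_half_pos ?_
  filter_upwards [Ioo_mem_nhdsGT (zero_lt_one (α := ℝ))] with q hq
  exact ⟨by nlinarith [hq.1, hq.2], by nlinarith [sq_nonneg (2 * q - 1)]⟩

lemma isBigO_one_regBeta_sq (hz : 0 < z) :
    (fun q : ℝ => regBeta ((1 - q - q) ^ 2) (1 / 2) z) =O[𝓝[>] 0] fun _ => (1 : ℝ) := by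
  refine isBigO_one_regBeta_comp one_half_pos hz ?_
  filter_upwards [Ioo_mem_nhdsGT (zero_lt_one (α := ℝ))] with q hq
  exact ⟨sq_nonneg _, by nlinarith [hq.1, hq.2]⟩

lemma continuousAt_zero_hashrate_ratio : ContinuousAt (fun q : ℝ => q / (1 - q)) 0 :=
  continuousAt_id.div (by fun_prop) (by norm_num)

lemma continuousAt_zero_regBeta_sq_coeff (hA : -1 < A) :
    ContinuousAt (fun q : ℝ => (A + 1) / ((1 - q) * (1 - q / (1 - q)) ^ 2 *
      ((1 - (q / (1 - q)) ^ (A + 1)) / (1 - q / (1 - q))))) 0 := by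
  have hA' : 0 < A + 1 := by linarith
  have hratio := continuousAt_zero_hashrate_ratio
  have hpow : ContinuousAt (fun q : ℝ => (q / (1 - q)) ^ (A + 1)) 0 :=
    hratio.rpow_const (Or.inr hA'.le)
  have hgeom : ContinuousAt
      (fun q : ℝ => (1 - (q / (1 - q)) ^ (A + 1)) / (1 - q / (1 - q))) 0 :=
    (continuousAt_const.sub hpow).div (by fun_prop) (by norm_num)
  exact continuousAt_const.div (by fun_prop) (by simp [Real.zero_rpow hA'.ne'])

lemma continuousAt_zero_Beta_term (hz : 0 < z) :
    ContinuousAt (fun q : ℝ =>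
      (1 - q) ^ (z - 1) * q ^ z / ((1 - q) * (1 - q / (1 - q)) * Beta z z)) 0 := by
  have hratio := continuousAt_zero_hashrate_ratio
  have hp : ContinuousAt (fun q : ℝ => (1 - q) ^ (z - 1)) 0 :=
    ContinuousAt.rpow_const (by fun_prop) (Or.inl (by norm_num))
  have hq : ContinuousAt (fun q : ℝ => q ^ z) 0 := continuousAt_id.rpow_const (Or.inr hz.le)
  exact (hp.mul hq).div (by fun_prop) (by simpa using (Beta_pos hz hz).ne')

lemma attackCycleDuration_sub_inv_isBigO_one (hz : 0 < z) (hA : -1 < A) :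
    (fun q => attackCycleDuration z A q - q⁻¹) =O[𝓝[>] 0] fun _ => (1 : ℝ) := by
  have bounded_of_continuousAt {f : ℝ → ℝ} (hf : ContinuousAt f 0) :
      f =O[𝓝[>] 0] fun _ => (1 : ℝ) :=
    (hf.tendsto.isBigO_one ℝ).mono nhdsWithin_le_nhds
  have hcoeff : ContinuousAt (fun q : ℝ => z / (2 * (1 - q))) 0 :=
    continuousAt_const.div (by fun_prop) (by norm_num)
  have hfirst := (bounded_of_continuousAt hcoeff).mul (isBigO_one_regBeta_four_mul hz)
  have hsecond := (bounded_of_continuousAt (continuousAt_zero_regBeta_sq_coeff hA)).mul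
    (isBigO_one_regBeta_sq hz)
  have hthird := bounded_of_continuousAt (continuousAt_zero_Beta_term hz)
  simp only [mul_one] at hfirst hsecond
  simpa only [attackCycleDuration, one_div, add_sub_cancel_right]
    using (hfirst.add hsecond).sub hthird

theorem nakamoto_duration_small_q_general (hz : 0 < z) (hA : -1 < A) :
    Tendsto (fun q => q * attackCycleDuration z A q) (𝓝[>] 0) (𝓝 1) :=
  tendsto_mul_of_sub_inv_isBigO_one (nhdsGT_le_nhdsNE 0)
    (attackCycleDuration_sub_inv_isBigO_one hz hA)

end Duration

/-- the expected duration satisfies `q · T(q) → 1` as `q → 0⁺`. -/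
theorem nakamoto_duration_small_q (z A : ℕ) (hz : 1 ≤ z) (hAz : z ≤ A) :
    Tendsto (fun q : ℝ =>
        q * (let p : ℝ := 1 - q
             let lam : ℝ := q / p
             (z : ℝ) / (2 * p) * regBeta (4 * p * q) (z : ℝ) (1 / 2)
              + ((A : ℝ) + 1) / (p * (1 - lam) ^ 2 * ((1 - lam ^ (A + 1)) / (1 - lam)))
                  * regBeta ((p - q) ^ 2) (1 / 2) (z : ℝ)
              - p ^ (z - 1) * q ^ z / (p * (1 - lam) * Beta (z : ℝ) (z : ℝ))
              + 1 / q))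
      (nhdsWithin 0 (Set.Ioi 0)) (nhds 1) := by
  have hA : (-1 : ℝ) < A := by linarith [A.cast_nonneg (α := ℝ)]
  simpa only [attackCycleDuration, ← Nat.cast_pred hz, ← Nat.cast_add_one, Real.rpow_natCast]
    using nakamoto_duration_small_q_general (Nat.cast_pos.2 hz) hA
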